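/- Let m ≥ n and let F_3, G_3 ∈ K[y_1,…,y_n] ⊂ K[y_1,…,y_m] be non-degenerate homogeneous cubic forms. Set F = F_3 + y_{n+1}^2 + ⋯ + y_m^2 and G = G_3 + y_{n+1}^2 + ⋯ + y_m^2. Then the Artinian Gorenstein local K-algebras A_F and A_G are isomorphic as K-algebras if and only if F_3 and G_3 are projectively equivalent, i.e. there exist φ ∈ GL_n(K) and c ∈ K∖{0} with F_3 ∘ φ = c · G_3. -/

import Mathlib

/-- The contraction (derivative) action of the power series ring
`R = K[[x_1,…,x_n]]` on the polynomial ring `P = K[y_1,…,y_n]`: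
`f ∘ g = f(∂/∂y_1, …, ∂/∂y_n)(g)`.  It is defined on the monomial basis by
`x^α ∘ y^β = (∏ i, (β i)!/(β i - α i)!) y^(β-α)` (zero unless `α ≤ β`), the honest
iterated partial derivative, and extended `K`-linearly. -/
noncomputable def contract {K : Type*} [Field K] {n : ℕ} (f : MvPowerSeries (Fin n) K) :
    MvPolynomial (Fin n) K →ₗ[K] MvPolynomial (Fin n) K :=
  (MvPolynomial.basisMonomials (Fin n) K).constr K fun β =>
    ∑ α ∈ Finset.Iic β,
      (MvPowerSeries.coeff α f * ∏ i, ((β i).descFactorial (α i) : K)) •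
        MvPolynomial.monomial (β - α) (1 : K)

theorem contract_add {K : Type*} [Field K] {n : ℕ} (f g : MvPowerSeries (Fin n) K) :
    contract (f + g) = contract f + contract g := by
  unfold contract
  rw [← map_add]
  congr 1
  funext β
  simp only [Pi.add_apply]
  rw [← Finset.sum_add_distrib]
  exact Finset.sum_congr rfl fun α _ => by rw [map_add, add_mul, add_smul]

theorem contract_zero {K : Type*} [Field K] {n : ℕ} :
    contract (0 : MvPowerSeries (Fin n) K) = 0 := by
  unfold contract
  convert map_zero ((MvPolynomial.basisMonomials (Fin n) K).constr
    (M' := MvPolynomial (Fin n) K) K) using 2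
  funext β
  simp

/-- The annihilator `Ann_R(F) = Ann_R(⟨F⟩_R)` of (the cyclic `R`-submodule of
`P` generated by) a polynomial `F` under the contraction action; an ideal of
`R = K[[x_1,…,x_n]]`.  The Artinian Gorenstein local algebra associated to `F`
is `A_F = R ⧸ annR F`. -/
noncomputable def annR {K : Type*} [Field K] {n : ℕ} (F : MvPolynomial (Fin n) K) :
    Ideal (MvPowerSeries (Fin n) K) where
  carrier := {f | ∀ u : MvPowerSeries (Fin n) K, contract (u * f) F = 0}
  zero_mem' := fun u => by rw [mul_zero, contract_zero]; rfl
  add_mem' := fun {a b} ha hb u => by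
    rw [mul_add, contract_add, LinearMap.add_apply, ha u, hb u, add_zero]
  smul_mem' := fun c f hf u => by
    rw [smul_eq_mul, ← mul_assoc]; exact hf (u * c)

/-- The linear form `l 1 • x_1 + ⋯ + l n • x_n` in `R = K[[x_1,…,x_n]]`. -/
noncomputable def linForm {K : Type*} [Field K] {n : ℕ} (l : Fin n → K) :
    MvPowerSeries (Fin n) K :=
  ∑ i, MvPowerSeries.monomial (Finsupp.single i 1) (l i)

/-- A polynomial `F ∈ K[y_1,…,y_n]` is non-degenerate if `Ann_R(F)` contains no
nonzero linear form; equivalently, the embedding dimension of `A_F` is `n`,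
i.e. `HF_{A_F}(1) = n`. -/
def nondegenerate {K : Type*} [Field K] {n : ℕ} (F : MvPolynomial (Fin n) K) : Prop :=
  ∀ l : Fin n → K, linForm l ∈ annR F → l = 0

/-- Two forms `F, G ∈ K[y_1,…,y_n]` are projectively equivalent if they agree up
to an invertible linear change of coordinates `φ ∈ GL_n(K)` and a nonzero scalar
`c`: `F ∘ φ = c • G`. -/
def projEquiv {K : Type*} [Field K] {n : ℕ} (F G : MvPolynomial (Fin n) K) : Prop :=
  ∃ φ : GL (Fin n) K, ∃ c : K, c ≠ 0 ∧
    MvPolynomial.aeval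
      (fun i => ∑ j, (φ : Matrix (Fin n) (Fin n) K) i j •
        (MvPolynomial.X j : MvPolynomial (Fin n) K)) F = c • G

/-!
Let `F` be a form of degree `d` and `deg Q < d`. If `g ∈ K[[x_1,…,x_n]]` has zero constant term and
linear part `v_1 x_1 + ⋯ + v_n x_n`, then `g ^ d ∘ (F + Q) = d! F(v)`. So the `d`-th powers of
nilpotent elements of `A_{F+Q}` are determined, up to one common scalar, by the values of `F`.
Lifting the images of the variables under an isomorphism `A_{G+Q} ≅ A_{F+Q}` and taking linear parts
therefore produces a linear map `A` with `F ∘ A = c G`.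

For forms in the first `n` variables this gives, by compression, endomorphisms `A` and `B` of `K^n`
with `F ∘ A = a G` and `G ∘ B = b F`. Comparing the dimensions of the spaces of vectors along which
the derivative of `F`, respectively `G`, vanishes shows that `A` becomes invertible after adding a
map into that space for `F`, which does not change `F ∘ A`.

Conversely, a projective equivalence extends to all `m` variables by the identity and, suitably
rescaled, carries `F + Q` to a scalar multiple of `G + Q`.
-/

open MvPolynomial

section Contraction

variable {K : Type*} [Field K] {n : ℕ}

theorem contract_monomial_one (f : MvPowerSeries (Fin n) K) (β : Fin n →₀ ℕ) :
    contract f (monomial β 1) = ∑ α ∈ Finset.Iic β,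
      (MvPowerSeries.coeff α f * ∏ i, ((β i).descFactorial (α i) : K)) • monomial (β - α) 1 := by
  rw [contract, ← congrFun (coe_basisMonomials (Fin n) K) β, Module.Basis.constr_basis]

theorem contract_smul (c : K) (f : MvPowerSeries (Fin n) K) :
    contract (c • f) = c • contract f := by
  refine (basisMonomials (Fin n) K).ext fun β => ?_
  simp only [coe_basisMonomials, LinearMap.smul_apply, contract_monomial_one, Finset.smul_sum,
    map_smul, smul_smul, smul_eq_mul, mul_assoc]

theorem prod_descFactorial_add {σ : Type*} [Fintype σ] (β α γ : σ →₀ ℕ) :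
    ∏ i, (β i).descFactorial ((α + γ) i) =
      (∏ i, (β i).descFactorial (α i)) * ∏ i, ((β - α) i).descFactorial (γ i) := by
  rw [← Finset.prod_mul_distrib]
  refine Finset.prod_congr rfl fun i _ => ?_
  rw [Finsupp.add_apply, Finsupp.tsub_apply, mul_comm,
    ← Nat.descFactorial_mul_descFactorial (Nat.le_add_right (α i) (γ i)), Nat.add_sub_cancel_left]

theorem contract_mul (f g : MvPowerSeries (Fin n) K) :
    contract (f * g) = contract f ∘ₗ contract g := by
  refine (basisMonomials (Fin n) K).ext fun β => ?_
  simp only [coe_basisMonomials, LinearMap.comp_apply, contract_monomial_one, map_sum, map_smul,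
    MvPowerSeries.coeff_mul, Finset.sum_mul, Finset.sum_smul, Finset.smul_sum, Finset.sum_sigma']
  refine Finset.sum_bij' (fun x _ => ⟨x.2.2, x.2.1⟩) (fun x _ => ⟨x.2 + x.1, (x.2, x.1)⟩)
    ?_ ?_ ?_ (fun _ _ => rfl) ?_
  · rintro ⟨δ, γ, α⟩ h
    simp only [Finset.mem_sigma, Finset.mem_Iic, Finset.HasAntidiagonal.mem_antidiagonal] at h ⊢
    obtain ⟨hδ, rfl⟩ := h
    exact ⟨le_add_self.trans hδ, le_tsub_of_add_le_right hδ⟩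
  · rintro ⟨α, γ⟩ h
    simp only [Finset.mem_sigma, Finset.mem_Iic, Finset.HasAntidiagonal.mem_antidiagonal,
      and_true] at h ⊢
    exact (le_tsub_iff_right h.1).1 h.2
  · rintro ⟨δ, γ, α⟩ h
    obtain ⟨-, rfl⟩ : δ ≤ β ∧ γ + α = δ := by simpa using h
    rfl
  · rintro ⟨δ, γ, α⟩ h
    obtain ⟨-, rfl⟩ : δ ≤ β ∧ γ + α = δ := by simpa using h
    simp only [smul_smul, tsub_tsub, add_comm γ α, ← Nat.cast_prod, prod_descFactorial_add,
      Nat.cast_mul]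
    congr 1
    ring

theorem contract_one : contract (1 : MvPowerSeries (Fin n) K) = LinearMap.id := by
  refine (basisMonomials (Fin n) K).ext fun β => ?_
  rw [coe_basisMonomials, contract_monomial_one, Finset.sum_eq_single 0]
  · simp
  · intro α _ hα
    simp [MvPowerSeries.coeff_one, hα]
  · simp

/-- The contraction action of `K[[x_1,…,x_n]]` on `K[y_1,…,y_n]`, bundled as a representation. -/
noncomputable def contractHom :
    MvPowerSeries (Fin n) K →ₐ[K] Module.End K (MvPolynomial (Fin n) K) :=
  AlgHom.ofLinearMap ⟨⟨contract, contract_add⟩, contract_smul⟩ contract_one contract_mul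

theorem contract_C (a : K) :
    contract (MvPowerSeries.C (σ := Fin n) a) = a • LinearMap.id := by
  rw [← mul_one (MvPowerSeries.C a), ← MvPowerSeries.smul_eq_C_mul, contract_smul, contract_one]

theorem contractHom_apply (f : MvPowerSeries (Fin n) K) : contractHom f = contract f := rfl

theorem contract_sub_apply (f g : MvPowerSeries (Fin n) K) (F : MvPolynomial (Fin n) K) :
    contract (f - g) F = contract f F - contract g F := by
  simp only [← contractHom_apply, map_sub, LinearMap.sub_apply]

theorem contract_X (i : Fin n) :
    contract (MvPowerSeries.X i) = (pderiv (R := K) i).toLinearMap := by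
  refine (basisMonomials (Fin n) K).ext fun β => ?_
  have hprod : ∏ j, ((β j).descFactorial (Finsupp.single i 1 j) : K) = β i := by
    rw [Finset.prod_eq_single i (fun j _ hj => by simp [hj.symm]) (by simp)]
    simp
  rw [coe_basisMonomials, contract_monomial_one, Derivation.coeFn_coe, pderiv_monomial,
    Finset.sum_eq_single (Finsupp.single i 1)]
  · rw [hprod, MvPowerSeries.coeff_X, if_pos rfl, smul_monomial, smul_eq_mul, mul_one]
  · intro α _ hα
    simp [MvPowerSeries.coeff_X, hα]
  · intro hβ
    have hβ_zero : β i = 0 := by simpa using hβ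
    rw [hprod, hβ_zero, Nat.cast_zero, mul_zero, zero_smul]

theorem contract_eq_zero_of_totalDegree_lt_order {f : MvPowerSeries (Fin n) K}
    {F : MvPolynomial (Fin n) K} (h : F.totalDegree < f.order) : contract f F = 0 := by
  rw [F.as_sum, map_sum]
  refine Finset.sum_eq_zero fun β hβ => ?_
  rw [← mul_one (coeff β F), ← smul_eq_mul, ← smul_monomial, map_smul, contract_monomial_one,
    Finset.sum_eq_zero, smul_zero]
  intro α hα
  have hdeg : α.degree ≤ F.totalDegree :=
    (Finsupp.degree_mono (Finset.mem_Iic.1 hα)).trans (le_totalDegree hβ)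
  rw [MvPowerSeries.coeff_of_lt_order ((Nat.cast_le.2 hdeg).trans_lt h), zero_mul, zero_smul]

theorem mem_annR_iff {F : MvPolynomial (Fin n) K} {f : MvPowerSeries (Fin n) K} :
    f ∈ annR F ↔ contract f F = 0 := by
  refine ⟨fun h => by simpa using h 1, fun h u => ?_⟩
  rw [contract_mul, LinearMap.comp_apply, h, map_zero]

theorem annR_smul {c : K} (hc : c ≠ 0) (F : MvPolynomial (Fin n) K) : annR (c • F) = annR F := by
  ext f
  simp [mem_annR_iff, hc]

end Contraction

section LinearForms

variable {K : Type*} [Field K] {n : ℕ}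

theorem linForm_eq_linearCombination (v : Fin n → K) :
    linForm v = Fintype.linearCombination K MvPowerSeries.X v := by
  simp only [linForm, Fintype.linearCombination_apply, MvPowerSeries.X, ← map_smul, smul_eq_mul,
    mul_one]

theorem linForm_sub (v w : Fin n → K) : linForm (v - w) = linForm v - linForm w := by
  simp only [linForm_eq_linearCombination, map_sub]

theorem constantCoeff_linForm (v : Fin n → K) : (linForm v).constantCoeff = 0 := by
  simp [linForm_eq_linearCombination, Fintype.linearCombination_apply]

/-- The coefficient vector of the linear part of a power series, a left inverse of `linForm`. -/
noncomputable def linearPart : MvPowerSeries (Fin n) K →ₗ[K] Fin n → K :=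
  LinearMap.pi fun i => MvPowerSeries.coeff (Finsupp.single i 1)

theorem linearPart_linForm (v : Fin n → K) : linearPart (linForm v) = v := by
  ext i
  simp [linearPart, linForm, MvPowerSeries.coeff_monomial, Finsupp.single_left_inj, eq_comm]

theorem two_le_order_sub_linForm_linearPart {g : MvPowerSeries (Fin n) K}
    (hg : g.constantCoeff = 0) : 2 ≤ (g - linForm (linearPart g)).order := by
  refine MvPowerSeries.nat_le_order (n := 2) fun α hα => ?_
  obtain hα | hα : α.degree = 0 ∨ α.degree = 1 := by omega
  · obtain rfl := (Finsupp.degree_eq_zero_iff α).1 hα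
    rw [MvPowerSeries.coeff_zero_eq_constantCoeff_apply, map_sub, hg, constantCoeff_linForm,
      sub_zero]
  · obtain ⟨i, rfl⟩ := (Finsupp.sum_eq_one_iff α).1 hα
    rw [map_sub, sub_eq_zero]
    exact (congrFun (linearPart_linForm (linearPart g)) i).symm

theorem contract_linForm_apply (v : Fin n → K) (F : MvPolynomial (Fin n) K) :
    contract (linForm v) F = ∑ i, v i • pderiv i F := by
  rw [linForm_eq_linearCombination, Fintype.linearCombination_apply, ← contractHom_apply, map_sum,
    LinearMap.sum_apply]
  simp only [map_smul, contractHom_apply, contract_X, LinearMap.smul_apply, Derivation.coeFn_coe]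

theorem contract_linForm_mul (v : Fin n → K) (p q : MvPolynomial (Fin n) K) :
    contract (linForm v) (p * q) =
      contract (linForm v) p * q + p * contract (linForm v) q := by
  simp only [contract_linForm_apply, pderiv_mul, smul_add, Finset.sum_add_distrib, Finset.sum_mul,
    Finset.mul_sum, smul_mul_assoc, mul_smul_comm]

theorem contract_linForm_X (v : Fin n → K) (i : Fin n) : contract (linForm v) (X i) = C (v i) := by
  simp [contract_linForm_apply, pderiv_X, Pi.single_apply, smul_eq_C_mul]

theorem contract_linForm_C (v : Fin n → K) (a : K) : contract (linForm v) (C a) = 0 := by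
  simp [contract_linForm_apply]

theorem isHomogeneous_contract_linForm (v : Fin n → K) {F : MvPolynomial (Fin n) K} {d : ℕ}
    (hF : F.IsHomogeneous d) : (contract (linForm v) F).IsHomogeneous (d - 1) := by
  rw [contract_linForm_apply]
  refine IsHomogeneous.sum _ _ _ fun i _ => ?_
  rw [smul_eq_C_mul]
  exact hF.pderiv.C_mul _

theorem eval_contract_linForm (v : Fin n → K) {F : MvPolynomial (Fin n) K} {d : ℕ}
    (hF : F.IsHomogeneous d) : eval v (contract (linForm v) F) = d * eval v F := by
  simpa [contract_linForm_apply, smul_eval] using congrArg (eval v) hF.sum_X_mul_pderiv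

theorem contract_linForm_pow (v : Fin n → K) {F : MvPolynomial (Fin n) K} {d : ℕ}
    (hF : F.IsHomogeneous d) :
    contract (linForm v ^ d) F = C (d.factorial * eval v F) := by
  induction d generalizing F with
  | zero =>
    rw [totalDegree_eq_zero_iff_eq_C.1 (Nat.le_zero.1 hF.totalDegree_le)]
    simp [contract_one]
  | succ d ih =>
    rw [pow_succ, contract_mul, LinearMap.comp_apply, ih (isHomogeneous_contract_linForm v hF),
      eval_contract_linForm v hF, Nat.factorial_succ]
    congr 1
    push_cast
    ring

end LinearForms

section LeadingForms

theorem succ_le_order_pow_sub_pow {σ R : Type*} [CommRing R]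
    {f g : MvPowerSeries σ R} (hf : f.constantCoeff = 0) (hg : g.constantCoeff = 0)
    (hfg : 2 ≤ (f - g).order) (d : ℕ) : (d + 1 : ℕ) ≤ (f ^ d - g ^ d).order := by
  induction d with
  | zero => simp
  | succ d ih =>
    have hsplit : f ^ (d + 1) - g ^ (d + 1) = f ^ d * (f - g) + (f ^ d - g ^ d) * g := by ring
    have hleft : (d + 2 : ℕ) ≤ (f ^ d * (f - g)).order := by
      refine le_trans ?_ MvPowerSeries.le_order_mul
      push_cast
      exact add_le_add (MvPowerSeries.le_order_pow_of_constantCoeff_eq_zero d hf) hfg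
    have hright : (d + 2 : ℕ) ≤ ((f ^ d - g ^ d) * g).order := by
      refine le_trans ?_ MvPowerSeries.le_order_mul
      exact add_le_add ih (MvPowerSeries.one_le_order_iff_constCoeff_eq_zero.2 hg)
    rw [hsplit]
    exact (le_min hleft hright).trans MvPowerSeries.min_order_le_add

variable {K : Type*} [Field K] {n d : ℕ}

theorem contract_pow_add {g : MvPowerSeries (Fin n) K} (hg : g.constantCoeff = 0)
    {F Q : MvPolynomial (Fin n) K} (hF : F.IsHomogeneous d) (hQ : Q.totalDegree < d) :
    contract (g ^ d) (F + Q) = C (d.factorial * eval (linearPart g) F) := by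
  have hQ_zero : contract (g ^ d) Q = 0 :=
    contract_eq_zero_of_totalDegree_lt_order <| (Nat.cast_lt.2 hQ).trans_le
      (MvPowerSeries.le_order_pow_of_constantCoeff_eq_zero d hg)
  have hF_linear : contract (g ^ d - linForm (linearPart g) ^ d) F = 0 :=
    contract_eq_zero_of_totalDegree_lt_order <|
      (Nat.cast_lt.2 (Nat.lt_succ_of_le hF.totalDegree_le)).trans_le
        (succ_le_order_pow_sub_pow hg (constantCoeff_linForm _)
          (two_le_order_sub_linForm_linearPart hg) d)
  rw [map_add, hQ_zero, add_zero, ← contract_linForm_pow _ hF, ← sub_eq_zero,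
    ← contract_sub_apply, hF_linear]

end LeadingForms

section LinearSubstitution

variable {R : Type*} [CommRing R] {σ τ υ : Type*} [Fintype τ] [Fintype υ]

/-- The linear substitution `X i ↦ ∑ j, A i j • X j`, that is `F ↦ F ∘ A`. -/
noncomputable def linSubst (A : Matrix σ τ R) : MvPolynomial σ R →ₐ[R] MvPolynomial τ R :=
  bind₁ A.toMvPolynomial

theorem linSubst_X (A : Matrix σ τ R) (i : σ) : linSubst A (X i) = A.toMvPolynomial i :=
  bind₁_X_right _ i

theorem linSubst_C (A : Matrix σ τ R) (a : R) : linSubst A (C a) = C a :=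
  bind₁_C_right _ a

theorem linSubst_linSubst (A : Matrix σ τ R) (B : Matrix τ υ R) (F : MvPolynomial σ R) :
    linSubst B (linSubst A F) = linSubst (A * B) F := by
  have hrows : (A * B).toMvPolynomial = fun i => bind₁ B.toMvPolynomial (A.toMvPolynomial i) :=
    funext (Matrix.toMvPolynomial_mul A B)
  rw [linSubst, linSubst, linSubst, bind₁_bind₁, hrows]

theorem linSubst_one [DecidableEq τ] (F : MvPolynomial τ R) :
    linSubst (1 : Matrix τ τ R) F = F := by
  rw [linSubst, Matrix.toMvPolynomial_one, bind₁_X_left, AlgHom.id_apply]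

theorem eval_linSubst (A : Matrix σ τ R) (F : MvPolynomial σ R) (v : τ → R) :
    eval v (linSubst A F) = eval (A.mulVec v) F := by
  have hrows : (fun i => eval v (A.toMvPolynomial i)) = A.mulVec v :=
    funext fun i => A.toMvPolynomial_eval_eq_apply i v
  rw [← hrows]
  exact eval₂Hom_bind₁ _ _ _ F

theorem isHomogeneous_linSubst (A : Matrix σ τ R) {F : MvPolynomial σ R} {d : ℕ}
    (hF : F.IsHomogeneous d) : (linSubst A F).IsHomogeneous d :=
  one_mul d ▸ hF.aeval _ A.toMvPolynomial_isHomogeneous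

theorem linSubst_smul (c : R) (A : Matrix σ τ R) {F : MvPolynomial σ R} {d : ℕ}
    (hF : F.IsHomogeneous d) : linSubst (c • A) F = c ^ d • linSubst A F := by
  have hrow (i : σ) : (c • A).toMvPolynomial i = C c * A.toMvPolynomial i := by
    simp [Matrix.toMvPolynomial, Finset.mul_sum, C_mul_monomial]
  have hmonomial {α : σ →₀ ℕ} (hα : α ∈ F.support) :
      linSubst (c • A) (monomial α (F.coeff α)) = c ^ d • linSubst A (monomial α (F.coeff α)) := by
    have hdeg : ∑ i ∈ α.support, α i = d := by
      rw [← Finsupp.degree_apply, Finsupp.degree_eq_weight_one]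
      exact hF (mem_support_iff.1 hα)
    simp only [linSubst, bind₁_monomial, hrow, mul_pow, Finset.prod_mul_distrib,
      Finset.prod_pow_eq_pow_sum, hdeg, smul_eq_C_mul, map_pow]
    ring
  rw [F.as_sum, map_sum, map_sum, Finset.smul_sum]
  exact Finset.sum_congr rfl fun α hα => hmonomial hα

theorem linSubst_eq_self_of_mem_supported {s : Set τ} {A : Matrix τ τ R} [DecidableEq τ]
    (hA : ∀ i ∈ s, A i = (1 : Matrix τ τ R) i) {F : MvPolynomial τ R} (hF : F ∈ supported R s) :
    linSubst A F = F := by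
  have hle : supported R s ≤ AlgHom.equalizer (linSubst A) (AlgHom.id R _) := by
    refine Algebra.adjoin_le ?_
    rintro _ ⟨i, hi, rfl⟩
    change linSubst A (X i) = X i
    rw [linSubst_X, ← congrFun Matrix.toMvPolynomial_one i, Matrix.toMvPolynomial,
      Matrix.toMvPolynomial, hA i hi]
  exact hle hF

variable {K : Type*} [Field K] {m n : ℕ}

theorem coe_toMvPolynomial (A : Matrix (Fin m) (Fin n) K) (i : Fin m) :
    (A.toMvPolynomial i : MvPowerSeries (Fin n) K) = linForm (A i) := by
  rw [linForm, Matrix.toMvPolynomial, ← coeToMvPowerSeries.ringHom_apply, map_sum]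
  simp only [coeToMvPowerSeries.ringHom_apply, coe_monomial]

theorem contract_linForm_linSubst (v : Fin n → K) (A : Matrix (Fin m) (Fin n) K)
    (F : MvPolynomial (Fin m) K) :
    contract (linForm v) (linSubst A F) = linSubst A (contract (linForm (A.mulVec v)) F) := by
  induction F using MvPolynomial.induction_on with
  | C a => simp only [linSubst_C, contract_linForm_C, map_zero]
  | add p q hp hq => simp only [map_add, hp, hq]
  | mul_X p k hp =>
    have hX : contract (linForm v) (A.toMvPolynomial k) = C (A.mulVec v k) := by
      simp [Matrix.toMvPolynomial, ← C_mul_X_eq_monomial, contract_linForm_mul,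
        contract_linForm_C, contract_linForm_X, Matrix.mulVec, dotProduct]
    simp only [map_mul, map_add, contract_linForm_mul, contract_linForm_X, hp, hX, linSubst_X,
      linSubst_C]

theorem contract_coe_linSubst (p : MvPolynomial (Fin n) K) (A : Matrix (Fin m) (Fin n) K)
    (F : MvPolynomial (Fin m) K) :
    contract p (linSubst A F) =
      linSubst A (contract (linSubst A.transpose p : MvPolynomial (Fin m) K) F) := by
  induction p using MvPolynomial.induction_on generalizing F with
  | C a =>
    simp only [linSubst_C, coe_C, contract_C, LinearMap.smul_apply, LinearMap.id_apply, map_smul]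
  | add p q hp hq =>
    simp only [map_add, coe_add, contract_add, LinearMap.add_apply, hp, hq]
  | mul_X p k hp =>
    have hX : (X k : MvPolynomial (Fin n) K) = (1 : Matrix (Fin n) (Fin n) K).toMvPolynomial k := by
      rw [Matrix.toMvPolynomial_one]
    have hk : A.mulVec ((1 : Matrix (Fin n) (Fin n) K) k) = A.transpose k := by
      ext i
      simp [Matrix.mulVec, dotProduct, Matrix.one_apply]
    rw [map_mul, coe_mul, coe_mul, contract_mul, contract_mul, LinearMap.comp_apply,
      LinearMap.comp_apply, linSubst_X, hX, coe_toMvPolynomial, coe_toMvPolynomial,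
      contract_linForm_linSubst, hk, hp]

end LinearSubstitution

section ApolarAlgebra

variable {K : Type*} [Field K] {m n : ℕ}

/-- The local algebra `A_F = K[[x_1,…,x_n]] ⧸ Ann_R(F)` apolar to `F`. -/
abbrev ApolarAlgebra (F : MvPolynomial (Fin n) K) : Type _ :=
  MvPowerSeries (Fin n) K ⧸ annR F

/-- The quotient map `K[[x_1,…,x_n]] → A_F`. -/
noncomputable abbrev ApolarAlgebra.mk (F : MvPolynomial (Fin n) K) :
    MvPowerSeries (Fin n) K →ₐ[K] ApolarAlgebra F :=
  Ideal.Quotient.mkₐ K (annR F)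

namespace ApolarAlgebra

theorem mk_surjective (F : MvPolynomial (Fin n) K) : Function.Surjective (mk F) :=
  Ideal.Quotient.mkₐ_surjective K _

theorem mk_eq_zero_iff {F : MvPolynomial (Fin n) K} {f : MvPowerSeries (Fin n) K} :
    mk F f = 0 ↔ contract f F = 0 :=
  Ideal.Quotient.eq_zero_iff_mem.trans mem_annR_iff

theorem mk_eq_mk_iff {F : MvPolynomial (Fin n) K} {f g : MvPowerSeries (Fin n) K} :
    mk F f = mk F g ↔ contract f F = contract g F := by
  rw [← sub_eq_zero, ← map_sub, mk_eq_zero_iff, contract_sub_apply, sub_eq_zero]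

/-- The map `K[x_1,…,x_n] → A_F` on polynomials. -/
noncomputable def ofMvPolynomial (F : MvPolynomial (Fin n) K) :
    MvPolynomial (Fin n) K →ₐ[K] ApolarAlgebra F :=
  (mk F).comp (coeToMvPowerSeries.algHom K)

theorem ofMvPolynomial_apply (F p : MvPolynomial (Fin n) K) :
    ofMvPolynomial F p = mk F (p : MvPowerSeries (Fin n) K) := by
  simp [ofMvPolynomial]

theorem ofMvPolynomial_surjective (F : MvPolynomial (Fin n) K) :
    Function.Surjective (ofMvPolynomial F) := by
  intro a
  obtain ⟨f, rfl⟩ := mk_surjective F a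
  refine ⟨MvPowerSeries.truncTotal (F.totalDegree + 1) f, ?_⟩
  rw [ofMvPolynomial_apply, mk_eq_mk_iff, ← sub_eq_zero, ← contract_sub_apply]
  refine contract_eq_zero_of_totalDegree_lt_order <|
    (Nat.cast_lt.2 F.totalDegree.lt_succ_self).trans_le (MvPowerSeries.nat_le_order fun α hα => ?_)
  rw [map_sub, coeff_coe, MvPowerSeries.coeff_truncTotal _ hα, sub_self]

theorem ker_ofMvPolynomial_linSubst (φ : GL (Fin n) K) (F : MvPolynomial (Fin n) K) :
    RingHom.ker (ofMvPolynomial (linSubst φ.val F)) =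
      RingHom.ker ((ofMvPolynomial F).comp (linSubst φ.val.transpose)) := by
  have hinj : Function.Injective (linSubst φ.val) :=
    Function.LeftInverse.injective (g := linSubst φ.inv) fun p => by
      rw [linSubst_linSubst, φ.val_inv, linSubst_one]
  ext p
  rw [RingHom.mem_ker, RingHom.mem_ker, AlgHom.comp_apply, ofMvPolynomial_apply,
    ofMvPolynomial_apply, mk_eq_zero_iff, mk_eq_zero_iff, contract_coe_linSubst,
    map_eq_zero_iff _ hinj]

theorem nonempty_algEquiv_linSubst (φ : GL (Fin n) K) (F : MvPolynomial (Fin n) K) :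
    Nonempty (ApolarAlgebra F ≃ₐ[K] ApolarAlgebra (linSubst φ.val F)) := by
  have hsubst : Function.Surjective (linSubst φ.val.transpose) :=
    Function.RightInverse.surjective (g := linSubst φ.inv.transpose) fun p => by
      rw [linSubst_linSubst, ← Matrix.transpose_mul, φ.val_inv, Matrix.transpose_one, linSubst_one]
  have hsurj : Function.Surjective ((ofMvPolynomial F).comp (linSubst φ.val.transpose)) :=
    (ofMvPolynomial_surjective F).comp hsubst
  exact ⟨(Ideal.quotientKerAlgEquivOfSurjective hsurj).symm.trans
    ((Ideal.quotientEquivAlgOfEq K (ker_ofMvPolynomial_linSubst φ F).symm).trans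
      (Ideal.quotientKerAlgEquivOfSurjective (ofMvPolynomial_surjective _)))⟩

theorem nonempty_algEquiv_of_linSubst_eq_smul {F G : MvPolynomial (Fin n) K} (φ : GL (Fin n) K)
    {c : K} (hc : c ≠ 0) (h : linSubst φ.val F = c • G) :
    Nonempty (ApolarAlgebra F ≃ₐ[K] ApolarAlgebra G) := by
  obtain ⟨θ⟩ := nonempty_algEquiv_linSubst φ F
  have hann : annR (linSubst φ.val F) = annR G := by rw [h, annR_smul hc]
  exact ⟨θ.trans (Ideal.quotientEquivAlgOfEq K hann)⟩

end ApolarAlgebra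

end ApolarAlgebra

section Comparison

theorem exists_ne_zero_forall_eq_mul {α K : Type*} [Field K] {f h : α → K}
    (hfh : ∀ (r : K) (a b : α), f a = r * f b ↔ h a = r * h b) :
    ∃ c ≠ 0, ∀ a, h a = c * f a := by
  have hzero (a : α) : f a = 0 ↔ h a = 0 := by simpa only [zero_mul] using hfh 0 a a
  by_cases hf : ∃ b, f b ≠ 0
  · obtain ⟨b, hb⟩ := hf
    refine ⟨h b / f b, div_ne_zero ((hzero b).not.1 hb) hb, fun a => ?_⟩
    rw [(hfh (f a / f b) a b).1 (div_mul_cancel₀ _ hb).symm]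
    ring
  · push Not at hf
    exact ⟨1, one_ne_zero, fun a => by rw [(hzero a).1 (hf a), hf a, mul_zero]⟩

theorem natCast_le_cardinalMk_of_factorial_ne_zero {R : Type*} [CommRing R] {d : ℕ}
    (hd : (d.factorial : R) ≠ 0) : (d : Cardinal) ≤ Cardinal.mk R := by
  have hne {i j : ℕ} (hij : i < j) (hj : j < d) : (i : R) ≠ j := by
    intro h
    have hdvd : j - i ∣ d.factorial :=
      Nat.dvd_factorial (Nat.sub_pos_of_lt hij) ((Nat.sub_le j i).trans hj.le)
    refine hd (zero_dvd_iff.1 ?_)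
    simpa [Nat.cast_sub hij.le, h] using Nat.cast_dvd_cast (α := R) hdvd
  have hinj : Function.Injective fun i : Fin d => (i : R) := by
    intro i j hij
    rcases lt_trichotomy i j with h | h | h
    · exact absurd hij (hne h j.2)
    · exact h
    · exact absurd hij.symm (hne h i.2)
  simpa using Cardinal.lift_mk_le_lift_mk_of_injective hinj

variable {K : Type*} [Field K] {m n d : ℕ}

namespace ApolarAlgebra

theorem isNilpotent_mk (F : MvPolynomial (Fin n) K) {f : MvPowerSeries (Fin n) K}
    (hf : f.constantCoeff = 0) : IsNilpotent (mk F f) := by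
  refine ⟨F.totalDegree + 1, ?_⟩
  rw [← map_pow, mk_eq_zero_iff]
  exact contract_eq_zero_of_totalDegree_lt_order <|
    (Nat.cast_lt.2 F.totalDegree.lt_succ_self).trans_le
      (MvPowerSeries.le_order_pow_of_constantCoeff_eq_zero _ hf)

theorem exists_mk_eq_of_isNilpotent {F : MvPolynomial (Fin n) K} {a : ApolarAlgebra F}
    (ha : IsNilpotent a) : ∃ f : MvPowerSeries (Fin n) K, f.constantCoeff = 0 ∧ mk F f = a := by
  obtain ⟨f, rfl⟩ := mk_surjective F a
  by_cases hf : f.constantCoeff = 0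
  · exact ⟨f, hf, rfl⟩
  · have hunit : IsUnit (mk F f) :=
      (MvPowerSeries.isUnit_iff_constantCoeff.2 (isUnit_iff_ne_zero.2 hf)).map _
    have : Subsingleton (ApolarAlgebra F) := by
      by_contra hnontrivial
      rw [not_subsingleton_iff_nontrivial] at hnontrivial
      exact ha.not_isUnit hunit
    exact ⟨0, map_zero _, Subsingleton.elim _ _⟩

theorem exists_linearMap_mk_eq {F : MvPolynomial (Fin m) K} {G : MvPolynomial (Fin n) K}
    (θ : ApolarAlgebra G →ₐ[K] ApolarAlgebra F) :
    ∃ g : (Fin n → K) →ₗ[K] MvPowerSeries (Fin m) K,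
      ∀ v, (g v).constantCoeff = 0 ∧ mk F (g v) = θ (mk G (linForm v)) := by
  have hX (i : Fin n) : IsNilpotent (θ (mk G (MvPowerSeries.X i))) :=
    (isNilpotent_mk G (MvPowerSeries.constantCoeff_X i)).map θ
  choose g hg_zero hg using fun i => exists_mk_eq_of_isNilpotent (hX i)
  refine ⟨Fintype.linearCombination K g, fun v => ⟨?_, ?_⟩⟩
  · simp [Fintype.linearCombination_apply, MvPowerSeries.smul_eq_C_mul, hg_zero]
  · simp only [linForm_eq_linearCombination, Fintype.linearCombination_apply, map_sum, map_smul, hg]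

theorem mk_pow_eq_smul_mk_pow_iff {F Q : MvPolynomial (Fin n) K} (hF : F.IsHomogeneous d)
    (hQ : Q.totalDegree < d) (hd : (d.factorial : K) ≠ 0) {f g : MvPowerSeries (Fin n) K}
    (hf : f.constantCoeff = 0) (hg : g.constantCoeff = 0) (r : K) :
    mk (F + Q) f ^ d = r • mk (F + Q) g ^ d ↔
      eval (linearPart f) F = r * eval (linearPart g) F := by
  rw [← map_pow, ← map_pow, ← map_smul, mk_eq_mk_iff, contract_smul, LinearMap.smul_apply,
    contract_pow_add hf hF hQ, contract_pow_add hg hF hQ, smul_eq_C_mul, ← C_mul,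
    (C_injective _ _).eq_iff, mul_left_comm, mul_right_inj' hd]

theorem exists_linSubst_eq_smul {F Q : MvPolynomial (Fin m) K} {G Q' : MvPolynomial (Fin n) K}
    (hF : F.IsHomogeneous d) (hQ : Q.totalDegree < d) (hG : G.IsHomogeneous d)
    (hQ' : Q'.totalDegree < d) (hd : (d.factorial : K) ≠ 0)
    {θ : ApolarAlgebra (G + Q') →ₐ[K] ApolarAlgebra (F + Q)} (hθ : Function.Injective θ) :
    ∃ A : Matrix (Fin m) (Fin n) K, ∃ c ≠ (0 : K), linSubst A F = c • G := by
  obtain ⟨g, hg⟩ := exists_linearMap_mk_eq θ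
  have hratio (r : K) (v w : Fin n → K) : eval v G = r * eval w G ↔
      eval (linearPart (g v)) F = r * eval (linearPart (g w)) F := by
    have h := mk_pow_eq_smul_mk_pow_iff hG hQ' hd (constantCoeff_linForm v)
      (constantCoeff_linForm w) r
    rw [linearPart_linForm, linearPart_linForm] at h
    rw [← mk_pow_eq_smul_mk_pow_iff hF hQ hd (hg v).1 (hg w).1, (hg v).2, (hg w).2, ← map_pow θ,
      ← map_pow θ, ← map_smul θ, hθ.eq_iff, h]
  obtain ⟨c, hc, hgc⟩ := exists_ne_zero_forall_eq_mul hratio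
  refine ⟨LinearMap.toMatrix' (linearPart ∘ₗ g), c, hc, ?_⟩
  refine (isHomogeneous_linSubst _ hF).funext_of_le_card (smul_eq_C_mul G c ▸ hG.C_mul c)
    (fun v => ?_) (natCast_le_cardinalMk_of_factorial_ne_zero hd)
  rw [eval_linSubst, LinearMap.toMatrix'_mulVec, smul_eval]
  exact hgc v

end ApolarAlgebra

end Comparison

section Correction

variable {K V : Type*} [Field K] [AddCommGroup V] [Module K V] [FiniteDimensional K V]

theorem finrank_le_finrank_comap (f : V →ₗ[K] V) (W : Submodule K V) :
    Module.finrank K W ≤ Module.finrank K (W.comap f) := by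
  have hker : LinearMap.ker (W.mkQ ∘ₗ f) = W.comap f := by
    rw [LinearMap.ker_comp, Submodule.ker_mkQ]
  have hrank := (W.mkQ ∘ₗ f).finrank_range_add_finrank_ker
  have hquot := W.finrank_quotient_add_finrank
  have hle := (LinearMap.range (W.mkQ ∘ₗ f)).finrank_le
  rw [hker] at hrank
  omega

theorem exists_linearEquiv_sub_mem (f : V →ₗ[K] V) {W : Submodule K V}
    (hW : Module.finrank K (W.comap f) ≤ Module.finrank K W) :
    ∃ e : V ≃ₗ[K] V, ∀ v, e v - f v ∈ W := by
  let i : W.comap f ≃ₗ[K] W :=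
    LinearEquiv.ofFinrankEq _ _ (hW.antisymm (finrank_le_finrank_comap f W))
  obtain ⟨C, hC⟩ := (W.comap f).exists_isCompl
  let e : V →ₗ[K] V := LinearMap.ofIsCompl hC (W.subtype ∘ₗ i.toLinearMap) (f ∘ₗ C.subtype)
  have he (u : W.comap f) (c : C) : e (u + c) = i u + f c := by simp [e]
  have hdecomp (v : V) : ∃ (u : W.comap f) (c : C), (u : V) + c = v := by
    obtain ⟨u, c, h, -⟩ := Submodule.existsUnique_add_of_isCompl hC v
    exact ⟨u, c, h⟩
  have hinj : Function.Injective e := by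
    rw [← LinearMap.ker_eq_bot, LinearMap.ker_eq_bot']
    intro v hv
    obtain ⟨u, c, rfl⟩ := hdecomp v
    rw [he] at hv
    have hc_mem : (c : V) ∈ W.comap f := by
      rw [Submodule.mem_comap, eq_neg_of_add_eq_zero_right hv]
      exact W.neg_mem (i u).2
    have hc : (c : V) = 0 := Submodule.disjoint_def.1 hC.disjoint _ hc_mem c.2
    have hu : u = 0 := by simpa [hc] using hv
    rw [hu, hc, Submodule.coe_zero, add_zero]
  refine ⟨LinearEquiv.ofInjectiveEndo e hinj, fun v => ?_⟩
  obtain ⟨u, c, rfl⟩ := hdecomp v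
  rw [LinearEquiv.coe_ofInjectiveEndo, he, map_add, add_sub_add_right_eq_sub]
  exact W.sub_mem (i u).2 u.2

end Correction

section VertexSpace

variable {K : Type*} [Field K] {m n d : ℕ}

/-- The vectors `v` whose directional derivative annihilates `F`. Projectively, this is the vertex
of the cone `F = 0`; it vanishes exactly when `F` is non-degenerate. -/
noncomputable def vertexSpace (F : MvPolynomial (Fin n) K) : Submodule K (Fin n → K) :=
  ((annR F).restrictScalars K).comap (Fintype.linearCombination K MvPowerSeries.X)

theorem mem_vertexSpace_iff {F : MvPolynomial (Fin n) K} {v : Fin n → K} :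
    v ∈ vertexSpace F ↔ linForm v ∈ annR F := by
  rw [linForm_eq_linearCombination]
  rfl

theorem vertexSpace_smul {c : K} (hc : c ≠ 0) (F : MvPolynomial (Fin n) K) :
    vertexSpace (c • F) = vertexSpace F := by
  rw [vertexSpace, annR_smul hc, vertexSpace]

theorem comap_vertexSpace_le (A : Matrix (Fin m) (Fin n) K) (F : MvPolynomial (Fin m) K) :
    (vertexSpace F).comap A.mulVecLin ≤ vertexSpace (linSubst A F) := by
  intro v hv
  rw [Submodule.mem_comap, Matrix.mulVecLin_apply, mem_vertexSpace_iff, mem_annR_iff] at hv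
  rw [mem_vertexSpace_iff, mem_annR_iff, contract_linForm_linSubst, hv, map_zero]

theorem eval_eq_eval_of_sub_mem_vertexSpace {F : MvPolynomial (Fin n) K} (hF : F.IsHomogeneous d)
    (hd : (d.factorial : K) ≠ 0) {v w : Fin n → K} (hvw : v - w ∈ vertexSpace F) :
    eval v F = eval w F := by
  rw [mem_vertexSpace_iff, linForm_sub] at hvw
  have hpow := Ideal.mem_of_dvd _ (sub_dvd_pow_sub_pow (linForm v) (linForm w) d) hvw
  rw [mem_annR_iff, contract_sub_apply, contract_linForm_pow v hF, contract_linForm_pow w hF,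
    sub_eq_zero, (C_injective _ _).eq_iff] at hpow
  exact mul_left_cancel₀ hd hpow

theorem linSubst_eq_linSubst_of_sub_mem_vertexSpace {A B : Matrix (Fin m) (Fin n) K}
    {F : MvPolynomial (Fin m) K} (hF : F.IsHomogeneous d) (hd : (d.factorial : K) ≠ 0)
    (hAB : ∀ v, A.mulVec v - B.mulVec v ∈ vertexSpace F) : linSubst A F = linSubst B F := by
  refine (isHomogeneous_linSubst A hF).funext_of_le_card (isHomogeneous_linSubst B hF)
    (fun v => ?_) (natCast_le_cardinalMk_of_factorial_ne_zero hd)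
  rw [eval_linSubst, eval_linSubst]
  exact eval_eq_eval_of_sub_mem_vertexSpace hF hd (hAB v)

theorem finrank_comap_vertexSpace_le {F : MvPolynomial (Fin m) K} {G : MvPolynomial (Fin n) K}
    {A : Matrix (Fin m) (Fin n) K} {c : K} (hc : c ≠ 0)
    (h : linSubst A F = c • G) :
    Module.finrank K ((vertexSpace F).comap A.mulVecLin) ≤ Module.finrank K (vertexSpace G) := by
  refine Submodule.finrank_mono ?_
  rw [← vertexSpace_smul hc G, ← h]
  exact comap_vertexSpace_le A F

theorem projEquiv_iff_exists_linSubst_eq_smul {F G : MvPolynomial (Fin n) K} :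
    projEquiv F G ↔ ∃ φ : GL (Fin n) K, ∃ c : K, c ≠ 0 ∧ linSubst φ.val F = c • G := by
  have hrows (φ : GL (Fin n) K) : (fun i => ∑ j, φ.val i j • X j) = φ.val.toMvPolynomial := by
    ext1 i
    simp only [Matrix.toMvPolynomial, ← C_mul_X_eq_monomial, smul_eq_C_mul]
  simp only [projEquiv, hrows]
  rfl

theorem projEquiv_of_linSubst_eq_smul {F G : MvPolynomial (Fin n) K} (hF : F.IsHomogeneous d)
    (hd : (d.factorial : K) ≠ 0) {A B : Matrix (Fin n) (Fin n) K} {a b : K} (ha : a ≠ 0)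
    (hb : b ≠ 0) (hA : linSubst A F = a • G) (hB : linSubst B G = b • F) : projEquiv F G := by
  have hrank : Module.finrank K ((vertexSpace F).comap A.mulVecLin) ≤
      Module.finrank K (vertexSpace F) :=
    calc Module.finrank K ((vertexSpace F).comap A.mulVecLin)
      _ ≤ Module.finrank K (vertexSpace G) := finrank_comap_vertexSpace_le ha hA
      _ ≤ Module.finrank K ((vertexSpace G).comap B.mulVecLin) := finrank_le_finrank_comap _ _
      _ ≤ Module.finrank K (vertexSpace F) := finrank_comap_vertexSpace_le hb hB
  obtain ⟨e, he⟩ := exists_linearEquiv_sub_mem A.mulVecLin hrank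
  let φ : GL (Fin n) K := Matrix.GeneralLinearGroup.toLin.symm
    ((LinearMap.GeneralLinearGroup.generalLinearEquiv K _).symm e)
  have hφ (v : Fin n → K) : φ.val.mulVec v = e v := by
    rw [← Matrix.mulVecLin_apply, ← Matrix.GeneralLinearGroup.coe_toLin,
      MulEquiv.apply_symm_apply]
    rfl
  refine projEquiv_iff_exists_linSubst_eq_smul.2 ⟨φ, a, ha, ?_⟩
  rw [← hA]
  exact linSubst_eq_linSubst_of_sub_mem_vertexSpace hF hd fun v => hφ v ▸ he v

end VertexSpace

section Extension

variable {R : Type*} [CommRing R] {σ τ : Type*} [Fintype τ] [DecidableEq τ] {ι : σ → τ}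

/-- The matrix of the coordinate projection `R^τ → R^σ` along `ι : σ → τ`. Composing polynomials
with it is `MvPolynomial.rename ι`. -/
def coordMatrix (R : Type*) [CommRing R] (ι : σ → τ) : Matrix σ τ R :=
  (1 : Matrix τ τ R).submatrix ι id

theorem rename_eq_linSubst (ι : σ → τ) (F : MvPolynomial σ R) :
    rename ι F = linSubst (coordMatrix R ι) F := by
  suffices rename ι = linSubst (coordMatrix R ι) from DFunLike.congr_fun this F
  refine algHom_ext fun i => ?_
  rw [rename_X, linSubst_X]
  exact (congrFun Matrix.toMvPolynomial_one (ι i)).symm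

theorem coordMatrix_mul_transpose [DecidableEq σ] (hι : Function.Injective ι) :
    coordMatrix R ι * (coordMatrix R ι).transpose = 1 := by
  rw [coordMatrix, Matrix.transpose_submatrix, Matrix.transpose_one,
    ← Matrix.submatrix_mul _ _ ι id ι Function.bijective_id, one_mul, Matrix.submatrix_one _ hι]

variable [Fintype σ]

theorem linSubst_conj_eq_smul_of_rename (hι : Function.Injective ι) {F G : MvPolynomial σ R}
    {A : Matrix τ τ R} {c : R} (h : linSubst A (rename ι F) = c • rename ι G) :
    linSubst (coordMatrix R ι * A * (coordMatrix R ι).transpose) F = c • G := by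
  classical
  rw [← linSubst_linSubst, ← linSubst_linSubst, ← rename_eq_linSubst, h, map_smul,
    rename_eq_linSubst, linSubst_linSubst, coordMatrix_mul_transpose hι, linSubst_one]

variable [DecidableEq σ]

/-- The extension of an automorphism of `R^σ` along `ι : σ → τ` to an automorphism of `R^τ` fixing
the coordinates outside the range of `ι`. -/
def extendGL (hι : Function.Injective ι) : GL σ R →* GL τ R :=
  Units.map
    { toFun φ := 1 + (coordMatrix R ι).transpose * (φ - 1) * coordMatrix R ι
      map_one' := by rw [sub_self, Matrix.mul_zero, Matrix.zero_mul, add_zero]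
      map_mul' φ ψ := by
        have hsplit : φ * ψ - 1 = (φ - 1) + (ψ - 1) + (φ - 1) * (ψ - 1) := by noncomm_ring
        have hcancel (A : Matrix σ τ R) :
            coordMatrix R ι * ((coordMatrix R ι).transpose * A) = A := by
          rw [← Matrix.mul_assoc, coordMatrix_mul_transpose hι, Matrix.one_mul]
        rw [hsplit]
        simp only [Matrix.mul_assoc, Matrix.mul_add, Matrix.add_mul, Matrix.one_mul,
          Matrix.mul_one, hcancel]
        abel }

theorem coe_extendGL (hι : Function.Injective ι) (φ : GL σ R) : (extendGL hι φ).val =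
    1 + (coordMatrix R ι).transpose * (φ.val - 1) * coordMatrix R ι := rfl

theorem coordMatrix_mul_extendGL (hι : Function.Injective ι) (φ : GL σ R) :
    coordMatrix R ι * (extendGL hι φ).val = φ.val * coordMatrix R ι := by
  rw [coe_extendGL, Matrix.mul_add, Matrix.mul_one, ← Matrix.mul_assoc, ← Matrix.mul_assoc,
    coordMatrix_mul_transpose hι, Matrix.one_mul, Matrix.sub_mul, Matrix.one_mul,
    add_sub_cancel]

theorem extendGL_apply_of_notMem_range (hι : Function.Injective ι) (φ : GL σ R) {i : τ}
    (hi : i ∉ Set.range ι) : (extendGL hι φ).val i = (1 : Matrix τ τ R) i := by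
  have hcol (j : σ) : coordMatrix R ι j i = 0 :=
    Matrix.one_apply_ne fun h => hi ⟨j, h⟩
  ext k
  simp [coe_extendGL, Matrix.mul_assoc, Matrix.mul_apply (M := (coordMatrix R ι).transpose), hcol]

theorem linSubst_extendGL_rename (hι : Function.Injective ι) (φ : GL σ R) (F : MvPolynomial σ R) :
    linSubst (extendGL hι φ).val (rename ι F) = rename ι (linSubst φ.val F) := by
  rw [rename_eq_linSubst, rename_eq_linSubst, linSubst_linSubst, linSubst_linSubst,
    coordMatrix_mul_extendGL]

theorem linSubst_extendGL_of_mem_supported (hι : Function.Injective ι) (φ : GL σ R)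
    {Q : MvPolynomial τ R} (hQ : Q ∈ supported R (Set.range ι)ᶜ) :
    linSubst (extendGL hι φ).val Q = Q :=
  linSubst_eq_self_of_mem_supported (fun _ hi => extendGL_apply_of_notMem_range hι φ hi) hQ

end Extension

section NormalForms

variable {K : Type*} [Field K] {m n d : ℕ} {ι : Fin n → Fin m} {F G : MvPolynomial (Fin n) K}
  {Q : MvPolynomial (Fin m) K}

theorem projEquiv_of_algEquiv (hι : Function.Injective ι) (hF : F.IsHomogeneous d)
    (hG : G.IsHomogeneous d) (hQ : Q.totalDegree < d) (hd : (d.factorial : K) ≠ 0)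
    (θ : ApolarAlgebra (rename ι F + Q) ≃ₐ[K] ApolarAlgebra (rename ι G + Q)) :
    projEquiv F G := by
  obtain ⟨A, a, ha, hA⟩ := ApolarAlgebra.exists_linSubst_eq_smul hF.rename_isHomogeneous hQ
    hG.rename_isHomogeneous hQ hd (θ := θ.symm.toAlgHom) θ.symm.injective
  obtain ⟨B, b, hb, hB⟩ := ApolarAlgebra.exists_linSubst_eq_smul hG.rename_isHomogeneous hQ
    hF.rename_isHomogeneous hQ hd (θ := θ.toAlgHom) θ.injective
  exact projEquiv_of_linSubst_eq_smul hF hd ha hb (linSubst_conj_eq_smul_of_rename hι hA)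
    (linSubst_conj_eq_smul_of_rename hι hB)

theorem nonempty_algEquiv_of_projEquiv (hι : Function.Injective ι) (hF : F.IsHomogeneous (d + 1))
    (hQ : Q.IsHomogeneous d) (hQ_supp : Q ∈ supported K (Set.range ι)ᶜ) (h : projEquiv F G) :
    Nonempty (ApolarAlgebra (rename ι F + Q) ≃ₐ[K] ApolarAlgebra (rename ι G + Q)) := by
  obtain ⟨φ, c, hc, hφ⟩ := projEquiv_iff_exists_linSubst_eq_smul.1 h
  -- Rescaling by `c⁻¹` multiplies `c • G` by `c⁻¹ ^ (d + 1)` and `Q` by `c⁻¹ ^ d`, so both summands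
  -- pick up the same factor `c⁻¹ ^ d`; in particular no roots of `c` are needed.
  let Φ : GL (Fin m) K := Units.mk0 c⁻¹ (inv_ne_zero hc) • extendGL hι φ
  refine ApolarAlgebra.nonempty_algEquiv_of_linSubst_eq_smul Φ (pow_ne_zero d (inv_ne_zero hc)) ?_
  have hΦ : Φ.val = c⁻¹ • (extendGL hι φ).val := rfl
  rw [hΦ, map_add, linSubst_smul _ _ hF.rename_isHomogeneous, linSubst_smul _ _ hQ,
    linSubst_extendGL_rename, linSubst_extendGL_of_mem_supported hι φ hQ_supp, hφ, map_smul,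
    smul_smul, pow_succ, inv_mul_cancel_right₀ hc, smul_add]

theorem aF_normal_forms_iso_iff_proj_equiv_general (hι : Function.Injective ι)
    (hF : F.IsHomogeneous (d + 1)) (hG : G.IsHomogeneous (d + 1))
    (hd : ((d + 1).factorial : K) ≠ 0) (hQ : Q.IsHomogeneous d)
    (hQ_supp : Q ∈ supported K (Set.range ι)ᶜ) :
    Nonempty (ApolarAlgebra (rename ι F + Q) ≃ₐ[K] ApolarAlgebra (rename ι G + Q)) ↔
      projEquiv F G :=
  ⟨fun ⟨θ⟩ => projEquiv_of_algEquiv hι hF hG (Nat.lt_succ_of_le hQ.totalDegree_le) hd θ,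
    nonempty_algEquiv_of_projEquiv hι hF hQ hQ_supp⟩

theorem sum_X_sq_mem_supported {R : Type*} [CommSemiring R] [Nontrivial R] (hnm : n ≤ m) :
    ∑ j ∈ Finset.univ.filter (fun j : Fin m => n ≤ (j : ℕ)), (X j : MvPolynomial (Fin m) R) ^ 2 ∈
      supported R (Set.range (Fin.castLE hnm))ᶜ := by
  refine sum_mem fun j hj => pow_mem (X_mem_supported.2 ?_) 2
  rintro ⟨i, rfl⟩
  exact (Finset.mem_filter.1 hj).2.not_gt i.2

end NormalForms

/-- For `m ≥ n` and non-degenerate cubic forms `F_3, G_3 ∈ K[y_1,…,y_n]`, setting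
`F = F_3 + y_{n+1}^2 + ⋯ + y_m^2` and `G = G_3 + y_{n+1}^2 + ⋯ + y_m^2`, the
algebras `A_F` and `A_G` are isomorphic as `K`-algebras iff `F_3` and `G_3` are
projectively equivalent. -/
theorem aF_normal_forms_iso_iff_proj_equiv
    {K : Type*} [Field K] [IsAlgClosed K] [CharZero K] {m n : ℕ} (hnm : n ≤ m)
    (F3 G3 : MvPolynomial (Fin n) K)
    (hF3 : F3.IsHomogeneous 3) (hndF : nondegenerate F3)
    (hG3 : G3.IsHomogeneous 3) (hndG : nondegenerate G3) :
    Nonempty ((MvPowerSeries (Fin m) K ⧸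
        annR (K := K) (n := m) (MvPolynomial.rename (Fin.castLE hnm) F3 +
          ∑ j ∈ Finset.univ.filter (fun j : Fin m => n ≤ (j : ℕ)),
            MvPolynomial.X j ^ 2)) ≃ₐ[K]
      (MvPowerSeries (Fin m) K ⧸
        annR (K := K) (n := m) (MvPolynomial.rename (Fin.castLE hnm) G3 +
          ∑ j ∈ Finset.univ.filter (fun j : Fin m => n ≤ (j : ℕ)),
            MvPolynomial.X j ^ 2))) ↔
      projEquiv F3 G3 := by
  exact aF_normal_forms_iso_iff_proj_equiv_general (Fin.castLE_injective hnm) hF3 hG3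
    (Nat.cast_ne_zero.2 (Nat.factorial_ne_zero 3))
    (IsHomogeneous.sum _ _ _ fun j _ => (isHomogeneous_X K j).pow 2)
    (sum_X_sq_mem_supported hnm)
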